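/- arXiv:2109.11879 — 7 statements merged into one kernel-verified Lean document; each statement's English description precedes it below -/
import Mathlib

section
/- Let n, m be positive integers with m/n ≤ 1/2, and set α₀ = (688 − 480√2)/49. Define ρ_cont(n,m) = 4√(n+m) + 2√m if m/n ≤ α₀, and ρ_cont(n,m) = 4√n + 2√(2m) if α₀ ≤ m/n ≤ 1/2. Then the minimum of ρ_DB(A,B) over all pairs of disjoint nonempty finite sets A, B ⊆ ℤ² with |A| = n and |B| = m satisfies ⌈ρ_cont(n,m)⌉ ≤ min ρ_DB(A,B) ≤ ⌈ρ_cont(n,m)⌉ + 2. -/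
/-!
Write `P` for `edgeP` and `ρ` for `rhoDB`.

*Lower bound.* Since `2ρ(A,B) = P(A) + P(B) + P(A ∪ B)` and the perimeter of a set is at least
twice the number of rows and columns it meets, `ρ ≥ 2(a + b + c + d) - (s + t)`, where `A` meets
`a` columns and `b` rows, `B` meets `c` columns and `d` rows, and they share `s` columns and `t`
rows. As `A` and `B` lie in the products of their column and row sets,
`n ≤ ab`, `m ≤ cd` and `n + m ≤ ab + cd - st`.
The AM–GM inequality gives `2(a + b) ≥ 4√(ab)` and
`(2c - s) + (2d - t) ≥ 2√((2c - s)(2d - t)) ≥ 2√(2cd - st)`. Hence, with `k = min(cd - st, m)`,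
`ρ ≥ 4√(n + m - k) + 2√(m + k)` for some `0 ≤ k ≤ m`. The right side is concave in `k`, so it is at
least the smaller of its values at `k = 0` and `k = m`; these are the two branches of `rhoCont`,
and `(688 - 480√2)/49` is exactly the ratio `m/n` at which the two branches agree.

*Upper bound.* Fill a box column by column to get a Young diagram `young q n` with `n` cells. For
the first branch, take a nearly square diagram with `n + m` cells and let `B` be a nearly square
subdiagram in its corner: this has `ρ ≤ 2⌈2√(n + m)⌉ + ⌈2√m⌉`. For the second branch, take `A`
nearly square and glue to its first column a block `B` of height `s` and width `w` with
`s + 2w = ⌈2√(2m)⌉`: this has `ρ ≤ 2⌈2√n⌉ + ⌈2√(2m)⌉`. Three roundings lose strictly less than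
`3`, that is at most `2` beyond the ceiling.
-/

/-- The four lattice neighbors of a point in `ℤ × ℤ` (the points at `ℓ¹` distance 1). -/
def nbrs (u : ℤ × ℤ) : Finset (ℤ × ℤ) :=
  {(u.1 + 1, u.2), (u.1 - 1, u.2), (u.1, u.2 + 1), (u.1, u.2 - 1)}

/-- Edge perimeter of a finite subset of `ℤ × ℤ`: the number of unordered pairs
`{u, v}` with `‖u - v‖₁ = 1` and exactly one of `u, v` in `A` (counted via the
endpoint lying in `A`). -/
def edgeP (A : Finset (ℤ × ℤ)) : ℕ :=
  ∑ u ∈ A, ((nbrs u).filter (fun v => v ∉ A)).card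

/-- Number of unordered pairs `{u, v}` with `‖u - v‖₁ = 1`, `u ∈ A`, `v ∈ B`. -/
def crossE (A B : Finset (ℤ × ℤ)) : ℕ :=
  ∑ u ∈ A, ((nbrs u).filter (fun v => v ∈ B)).card

/-- Discrete double bubble perimeter: `P(A ∪ B) + e(A, B)`, so the shared
boundary is counted once. -/
def rhoDB (A B : Finset (ℤ × ℤ)) : ℕ := edgeP (A ∪ B) + crossE A B

/-- Continuous ℓ¹ double bubble minimum for integer volumes `n, m` with `m/n ≤ 1/2`. -/
noncomputable def rhoCont (n m : ℕ) : ℝ :=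
  if (m : ℝ) / n ≤ (688 - 480 * Real.sqrt 2) / 49 then
    4 * Real.sqrt (n + m) + 2 * Real.sqrt m
  else
    4 * Real.sqrt n + 2 * Real.sqrt (2 * m)

/-! ### Counting boundary edges by direction -/

/-- Number of ordered pairs `(u, u + d)` with `u ∈ A` and `Q (u + d)`. -/
def dirCount (A : Finset (ℤ × ℤ)) (Q : ℤ × ℤ → Prop) [DecidablePred Q] (d : ℤ × ℤ) : ℕ :=
  (A.filter (fun u => Q (u + d))).card

lemma sum_nbrs (A : Finset (ℤ × ℤ)) (Q : ℤ × ℤ → Prop) [DecidablePred Q] :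
    ∑ u ∈ A, ((nbrs u).filter Q).card =
      dirCount A Q (1, 0) + dirCount A Q (-1, 0) + dirCount A Q (0, 1) + dirCount A Q (0, -1) := by
  simp only [dirCount, Finset.card_filter, ← Finset.sum_add_distrib]
  refine Finset.sum_congr rfl fun u _ => ?_
  obtain ⟨x, y⟩ := u
  have h1 : ((x, y) : ℤ × ℤ) + (1, 0) = (x + 1, y) := by simp
  have h2 : ((x, y) : ℤ × ℤ) + (-1, 0) = (x - 1, y) := by simp [sub_eq_add_neg]
  have h3 : ((x, y) : ℤ × ℤ) + (0, 1) = (x, y + 1) := by simp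
  have h4 : ((x, y) : ℤ × ℤ) + (0, -1) = (x, y - 1) := by simp [sub_eq_add_neg]
  rw [h1, h2, h3, h4, nbrs, Finset.sum_insert, Finset.sum_insert, Finset.sum_insert,
    Finset.sum_singleton]
  · ring
  · simp only [Finset.mem_singleton, Prod.mk.injEq]; omega
  · simp only [Finset.mem_insert, Finset.mem_singleton, Prod.mk.injEq]; omega
  · simp only [Finset.mem_insert, Finset.mem_singleton, Prod.mk.injEq]; omega

lemma edgeP_eq (A : Finset (ℤ × ℤ)) :
    edgeP A = dirCount A (· ∉ A) (1, 0) + dirCount A (· ∉ A) (-1, 0)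
      + dirCount A (· ∉ A) (0, 1) + dirCount A (· ∉ A) (0, -1) :=
  sum_nbrs A (· ∉ A)

lemma crossE_eq (A B : Finset (ℤ × ℤ)) :
    crossE A B = dirCount A (· ∈ B) (1, 0) + dirCount A (· ∈ B) (-1, 0)
      + dirCount A (· ∈ B) (0, 1) + dirCount A (· ∈ B) (0, -1) :=
  sum_nbrs A (· ∈ B)

lemma dirCount_swap (A B : Finset (ℤ × ℤ)) (d : ℤ × ℤ) :
    dirCount A (· ∈ B) d = dirCount B (· ∈ A) (-d) := by
  unfold dirCount
  refine Finset.card_nbij' (· + d) (· + -d) ?_ ?_ ?_ ?_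
  · intro u hu
    simp only [Finset.coe_filter, Set.mem_ofPred_eq] at hu ⊢
    simpa using hu.symm
  · intro u hu
    simp only [Finset.coe_filter, Set.mem_ofPred_eq] at hu ⊢
    simpa using hu.symm
  · intro u _; simp
  · intro u _; simp

lemma crossE_comm (A B : Finset (ℤ × ℤ)) : crossE A B = crossE B A := by
  rw [crossE_eq, crossE_eq, dirCount_swap A B (1, 0), dirCount_swap A B (-1, 0),
    dirCount_swap A B (0, 1), dirCount_swap A B (0, -1)]
  simp only [Prod.neg_mk, neg_neg, neg_zero]
  ring

/-- The symmetric form of the double bubble perimeter. -/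
lemma two_mul_rhoDB (A B : Finset (ℤ × ℤ)) (h : Disjoint A B) :
    2 * rhoDB A B = edgeP A + edgeP B + edgeP (A ∪ B) := by
  have split : ∀ A B : Finset (ℤ × ℤ), Disjoint A B →
      edgeP A = ∑ u ∈ A, ((nbrs u).filter (fun v => v ∉ A ∪ B)).card + crossE A B := by
    intro A B h
    unfold edgeP crossE
    rw [← Finset.sum_add_distrib]
    refine Finset.sum_congr rfl fun u _ => ?_
    rw [← Finset.card_union_of_disjoint]
    · congr 1
      ext v
      have : v ∈ A → v ∉ B := fun hv => Finset.disjoint_left.1 h hv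
      simp only [Finset.mem_filter, Finset.mem_union]
      tauto
    · rw [Finset.disjoint_left]
      intro v
      simp only [Finset.mem_filter, Finset.mem_union]
      tauto
  have hA := split A B h
  have hB := split B A h.symm
  rw [crossE_comm B A, Finset.union_comm B A] at hB
  have hU : edgeP (A ∪ B) = ∑ u ∈ A, ((nbrs u).filter (fun v => v ∉ A ∪ B)).card
      + ∑ u ∈ B, ((nbrs u).filter (fun v => v ∉ A ∪ B)).card := by
    unfold edgeP
    rw [Finset.sum_union h]
  unfold rhoDB
  omega

/-! ### The perimeter bounds the number of rows and columns -/

/-- Each line `g = const` in direction `d` that meets `X` is left by `X` in direction `d` at the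
point of `X` on it where `f` is largest. -/
lemma card_image_le_dirCount (X : Finset (ℤ × ℤ)) (f g : ℤ × ℤ → ℤ) (d : ℤ × ℤ)
    (hf : ∀ u, f (u + d) = f u + 1) (hg : ∀ u, g (u + d) = g u) :
    (X.image g).card ≤ dirCount X (· ∉ X) d := by
  have : X.image g ⊆ (X.filter (fun u => u + d ∉ X)).image g := by
    intro y hy
    obtain ⟨u, hu, rfl⟩ := Finset.mem_image.1 hy
    obtain ⟨v, hv, hmax⟩ := Finset.exists_max_image (X.filter (fun v => g v = g u)) f
      ⟨u, by simp [hu]⟩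
    rw [Finset.mem_filter] at hv
    refine Finset.mem_image.2 ⟨v, Finset.mem_filter.2 ⟨hv.1, fun hvd => ?_⟩, hv.2⟩
    have := hmax (v + d) (Finset.mem_filter.2 ⟨hvd, by rw [hg, hv.2]⟩)
    rw [hf] at this
    omega
  exact (Finset.card_le_card this).trans Finset.card_image_le

lemma edgeP_ge (X : Finset (ℤ × ℤ)) :
    2 * ((X.image Prod.fst).card + (X.image Prod.snd).card) ≤ edgeP X := by
  rw [edgeP_eq]
  have h1 := card_image_le_dirCount X Prod.fst Prod.snd (1, 0) (by simp) (by simp)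
  have h2 := card_image_le_dirCount X (fun u => -u.1) Prod.snd (-1, 0)
    (by intro u; simp; ring) (by simp)
  have h3 := card_image_le_dirCount X Prod.snd Prod.fst (0, 1) (by simp) (by simp)
  have h4 := card_image_le_dirCount X (fun u => -u.2) Prod.fst (0, -1)
    (by intro u; simp; ring) (by simp)
  omega

/-- The combinatorial lower bound: `a, b`, `c, d`, `s, t` are the numbers of columns and rows met
by `A`, by `B`, and by both. -/
lemma exists_dims (A B : Finset (ℤ × ℤ)) (h : Disjoint A B) :
    ∃ a b c d s t : ℕ, s ≤ c ∧ t ≤ d ∧ A.card ≤ a * b ∧ B.card ≤ c * d ∧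
      A.card + B.card + s * t ≤ a * b + c * d ∧
      2 * (a + b + c + d) ≤ rhoDB A B + s + t := by
  have hsub : ∀ X : Finset (ℤ × ℤ), X ⊆ X.image Prod.fst ×ˢ X.image Prod.snd := by
    intro X u hu
    exact Finset.mem_product.2 ⟨Finset.mem_image_of_mem _ hu, Finset.mem_image_of_mem _ hu⟩
  refine ⟨(A.image Prod.fst).card, (A.image Prod.snd).card, (B.image Prod.fst).card,
    (B.image Prod.snd).card, (A.image Prod.fst ∩ B.image Prod.fst).card,
    (A.image Prod.snd ∩ B.image Prod.snd).card,
    Finset.card_le_card Finset.inter_subset_right,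
    Finset.card_le_card Finset.inter_subset_right, ?_, ?_, ?_, ?_⟩
  · rw [← Finset.card_product]; exact Finset.card_le_card (hsub A)
  · rw [← Finset.card_product]; exact Finset.card_le_card (hsub B)
  · rw [← Finset.card_product, ← Finset.card_product, ← Finset.card_product,
      ← Finset.product_inter_product, ← Finset.card_union_of_disjoint h,
      ← Finset.card_union_add_card_inter (A.image Prod.fst ×ˢ A.image Prod.snd)]
    exact Nat.add_le_add_right (Finset.card_le_card (Finset.union_subset_union (hsub A) (hsub B))) _
  · have h2 := two_mul_rhoDB A B h
    have hA := edgeP_ge A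
    have hB := edgeP_ge B
    have hU := edgeP_ge (A ∪ B)
    rw [Finset.image_union, Finset.image_union] at hU
    have e1 := Finset.card_union_add_card_inter (A.image Prod.fst) (B.image Prod.fst)
    have e2 := Finset.card_union_add_card_inter (A.image Prod.snd) (B.image Prod.snd)
    omega

/-! ### The continuous optimization problem -/

lemma two_sqrt_le {x z : ℝ} (hx : 0 ≤ x) (h : 4 * z ≤ x ^ 2) : 2 * √z ≤ x := by
  have : √z ≤ x / 2 := Real.sqrt_le_iff.2 ⟨by linarith, by nlinarith⟩
  linarith

/-- Neither branch of `rhoCont` is ever below `rhoCont`: `rhoCont` is the minimum of its two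
branches. -/
lemma rhoCont_le (n m : ℕ) (hn : 0 < n) :
    rhoCont n m ≤ 4 * √(n + m) + 2 * √m ∧ rhoCont n m ≤ 4 * √n + 2 * √(2 * m) := by
  have hn' : (0 : ℝ) < n := by exact_mod_cast hn
  have hm' : (0 : ℝ) ≤ m := by positivity
  have hy : 0 < √(n : ℝ) := Real.sqrt_pos.2 hn'
  have hy2 : √(n : ℝ) ^ 2 = n := Real.sq_sqrt hn'.le
  have hx : 0 ≤ √(m : ℝ) := Real.sqrt_nonneg _
  have hx2 : √(m : ℝ) ^ 2 = m := Real.sq_sqrt hm'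
  have hr : 0 ≤ √(2 : ℝ) := Real.sqrt_nonneg _
  have hr2 : √(2 : ℝ) ^ 2 = 2 := Real.sq_sqrt (by norm_num)
  have hr1 : √(2 : ℝ) < 5 / 3 := by nlinarith
  have hr3 : 1 < √(2 : ℝ) := by nlinarith
  have hz : 0 ≤ √((n : ℝ) + m) := Real.sqrt_nonneg _
  have hz2 : √((n : ℝ) + m) ^ 2 = n + m := Real.sq_sqrt (by positivity)
  have hprod : √(2 * (m : ℝ)) = √2 * √m := Real.sqrt_mul (by norm_num) _
  rw [hprod]
  unfold rhoCont
  rw [hprod]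
  set x := √(m : ℝ)
  set y := √(n : ℝ)
  set z := √((n : ℝ) + m)
  set r := √(2 : ℝ)
  -- The threshold is a perfect square in `ℚ(√2)`.
  have hα : (688 - 480 * r) / 49 = (4 * (5 - 3 * r) / 7) ^ 2 := by
    linear_combination (-144 / 49) * hr2
  have key : (5 - 3 * r) * (1 + 2 * r) = 7 * (r - 1) := by linear_combination (-6) * hr2
  have hratio : (m : ℝ) / n = (x / y) ^ 2 := by rw [div_pow, hx2, hy2]
  have hpos : 0 < 5 - 3 * r := by linarith
  split_ifs with hcase
  · refine ⟨le_rfl, ?_⟩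
    rw [hratio, hα] at hcase
    have h1 : x / y ≤ 4 * (5 - 3 * r) / 7 := by
      refine le_of_sq_le_sq hcase (by positivity)
    rw [div_le_iff₀ hy] at h1
    have h2 : (1 + 2 * r) * x ≤ 4 * (r - 1) * y := by
      have := mul_le_mul_of_nonneg_left h1 (by linarith : 0 ≤ 1 + 2 * r)
      calc _ ≤ _ := this
        _ = 4 / 7 * ((5 - 3 * r) * (1 + 2 * r)) * y := by ring
        _ = _ := by rw [key]; ring
    have h3 : 2 * z ≤ 2 * y + (r - 1) * x := by
      refine le_of_sq_le_sq ?_ (by nlinarith)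
      have : (2 * z) ^ 2 = 4 * y ^ 2 + 4 * x ^ 2 := by rw [mul_pow, hz2, hx2, hy2]; ring
      rw [this]
      nlinarith [mul_le_mul_of_nonneg_left h2 hx]
    linarith
  · refine ⟨?_, le_rfl⟩
    rw [hratio, hα, not_le] at hcase
    have h1 : 4 * (5 - 3 * r) / 7 ≤ x / y := by
      refine le_of_sq_le_sq hcase.le (by positivity)
    rw [le_div_iff₀ hy] at h1
    have h2 : 4 * (r - 1) * y ≤ (1 + 2 * r) * x := by
      have := mul_le_mul_of_nonneg_left h1 (by linarith : 0 ≤ 1 + 2 * r)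
      calc _ = 4 / 7 * ((5 - 3 * r) * (1 + 2 * r)) * y := by rw [key]; ring
        _ = (1 + 2 * r) * (4 * (5 - 3 * r) / 7 * y) := by ring
        _ ≤ _ := this
    have h3 : 2 * y + (r - 1) * x ≤ 2 * z := by
      refine le_of_sq_le_sq ?_ (by positivity)
      have : (2 * z) ^ 2 = 4 * y ^ 2 + 4 * x ^ 2 := by rw [mul_pow, hz2, hx2, hy2]; ring
      rw [this]
      nlinarith [mul_le_mul_of_nonneg_left h2 hx]
    linarith

/-- The function `k ↦ 4√(n + m - k) + 2√(m + k)` is concave, and its values at the ends of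
`[0, m]` are the two branches of `rhoCont`. -/
lemma rhoCont_le_of_mem (n m : ℕ) (hn : 0 < n) (hm : 0 < m) (k : ℝ) (h0 : 0 ≤ k) (h1 : k ≤ m) :
    rhoCont n m ≤ 4 * √(n + m - k) + 2 * √(m + k) := by
  obtain ⟨hF1, hF2⟩ := rhoCont_le n m hn
  have hm' : (0 : ℝ) < m := by exact_mod_cast hm
  have hn' : (0 : ℝ) < n := by exact_mod_cast hn
  set θ := k / m with hθ
  have hθ0 : 0 ≤ θ := by positivity
  have hθ1 : θ ≤ 1 := (div_le_one hm').2 h1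
  have hk : k = θ * m := by rw [hθ]; field_simp
  have hc := Real.strictConcaveOn_sqrt.concaveOn.2
  have c1 := hc (x := (n : ℝ) + m) (by simp; positivity) (y := (n : ℝ)) (by simp)
    (sub_nonneg.2 hθ1) hθ0 (by ring)
  have c2 := hc (x := (m : ℝ)) (by simp) (y := 2 * (m : ℝ)) (by simp)
    (sub_nonneg.2 hθ1) hθ0 (by ring)
  simp only [smul_eq_mul] at c1 c2
  rw [show (1 - θ) * ((n : ℝ) + m) + θ * n = n + m - k by rw [hk]; ring] at c1
  rw [show (1 - θ) * (m : ℝ) + θ * (2 * m) = m + k by rw [hk]; ring] at c2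
  have := mul_le_mul_of_nonneg_left hF1 (sub_nonneg.2 hθ1)
  have := mul_le_mul_of_nonneg_left hF2 hθ0
  linarith

lemma rhoCont_le_of_dims (n m : ℕ) (hn : 0 < n) (hm : 0 < m) (a b c d s t : ℝ)
    (ha : 0 ≤ a) (hb : 0 ≤ b) (hs : 0 ≤ s) (ht : 0 ≤ t) (hsc : s ≤ c) (htd : t ≤ d)
    (h1 : n ≤ a * b) (h2 : m ≤ c * d) (h3 : n + m + s * t ≤ a * b + c * d) :
    rhoCont n m ≤ 2 * (a + b + c + d) - s - t := by
  have hst : s * t ≤ c * d := mul_le_mul hsc htd ht (hs.trans hsc)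
  have hm0 : (0 : ℝ) ≤ m := by positivity
  refine (rhoCont_le_of_mem n m hn hm (min (c * d - s * t) m) (le_min (by linarith) hm0)
    (min_le_right _ _)).trans ?_
  have hk1 := min_le_left (c * d - s * t) (m : ℝ)
  have hk2 : (n : ℝ) + m - a * b ≤ min (c * d - s * t) m := le_min (by linarith) (by linarith)
  generalize min (c * d - s * t) (m : ℝ) = k at hk1 hk2
  have e1 : 2 * √((n : ℝ) + m - k) ≤ a + b :=
    two_sqrt_le (by linarith) (by nlinarith [sq_nonneg (a - b)])
  -- `(2c - s)(2d - t) - (2cd - st) = 2(c - s)(d - t)`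
  have e2 : 2 * √((m : ℝ) + k) ≤ (2 * c - s) + (2 * d - t) :=
    two_sqrt_le (by linarith) (by
      nlinarith [sq_nonneg ((2 * c - s) - (2 * d - t)),
        mul_nonneg (sub_nonneg.2 hsc) (sub_nonneg.2 htd)])
  linarith

lemma lower_bound (n m : ℕ) (hn : 0 < n) (hm : 0 < m) (A B : Finset (ℤ × ℤ))
    (h : Disjoint A B) (hA : A.card = n) (hB : B.card = m) :
    rhoCont n m ≤ rhoDB A B := by
  obtain ⟨a, b, c, d, s, t, hsc, htd, h1, h2, h3, h4⟩ := exists_dims A B h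
  rw [hA] at h1 h3
  rw [hB] at h2 h3
  have h4' : (2 : ℝ) * (a + b + c + d) ≤ rhoDB A B + s + t := by exact_mod_cast h4
  have := rhoCont_le_of_dims n m hn hm a b c d s t (by positivity) (by positivity) (by positivity)
    (by positivity) (by exact_mod_cast hsc) (by exact_mod_cast htd) (by exact_mod_cast h1)
    (by exact_mod_cast h2) (by exact_mod_cast h3)
  linarith

/-! ### Young diagrams and upper bounds for perimeters -/

/-- The first `n` cells of the quadrant strip `0 ≤ x`, `0 ≤ y < q`, filled column by column from
the bottom up. -/
def young (q n : ℕ) : Finset (ℤ × ℤ) :=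
  (Finset.range n).image (fun k => (((k / q : ℕ) : ℤ), ((k % q : ℕ) : ℤ)))

lemma mem_young {q n : ℕ} (hq : 0 < q) (x y : ℤ) :
    (x, y) ∈ young q n ↔ 0 ≤ x ∧ 0 ≤ y ∧ y < q ∧ q * x + y < n := by
  simp only [young, Finset.mem_image, Finset.mem_range, Prod.mk.injEq]
  constructor
  · rintro ⟨k, hk, rfl, rfl⟩
    refine ⟨by positivity, by positivity, by exact_mod_cast Nat.mod_lt k hq, ?_⟩
    have := Nat.div_add_mod k q
    exact_mod_cast this ▸ hk
  · rintro ⟨hx, hy, hyq, hn⟩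
    lift x to ℕ using hx
    lift y to ℕ using hy
    have hyq' : y < q := by exact_mod_cast hyq
    refine ⟨q * x + y, by exact_mod_cast hn, ?_, ?_⟩
    · rw [Nat.mul_add_div hq, Nat.div_eq_of_lt hyq', add_zero]
    · rw [Nat.mul_add_mod, Nat.mod_eq_of_lt hyq']

lemma card_young (q n : ℕ) : (young q n).card = n := by
  rw [young, Finset.card_image_of_injective, Finset.card_range]
  intro k l h
  simp only [Prod.mk.injEq, Nat.cast_inj] at h
  rw [← Nat.div_add_mod k q, ← Nat.div_add_mod l q, h.1, h.2]

lemma young_down {q n : ℕ} (hq : 0 < q) {x y x' y' : ℤ} (h : (x, y) ∈ young q n)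
    (hx' : 0 ≤ x') (hy' : 0 ≤ y') (hx : x' ≤ x) (hy : y' ≤ y) : (x', y') ∈ young q n := by
  rw [mem_young hq] at *
  have : (q : ℤ) * x' ≤ q * x := mul_le_mul_of_nonneg_left hx (by positivity)
  exact ⟨hx', hy', by omega, by omega⟩

lemma young_lt {q n p : ℕ} (hq : 0 < q) (hp : n ≤ p * q) {x y : ℤ} (h : (x, y) ∈ young q n) :
    x < p := by
  rw [mem_young hq] at h
  have : (n : ℤ) ≤ p * q := by exact_mod_cast hp
  have hq' : (0 : ℤ) < q := by exact_mod_cast hq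
  by_contra hc
  nlinarith

lemma dirCount_eq_zero {A : Finset (ℤ × ℤ)} {Q : ℤ × ℤ → Prop} [DecidablePred Q] {d : ℤ × ℤ}
    (h : ∀ u ∈ A, ¬ Q (u + d)) : dirCount A Q d = 0 := by
  rw [dirCount, Finset.card_eq_zero, Finset.filter_eq_empty_iff]
  exact h

/-- If each line in direction `d` carries at most one of the counted edges, then there are no more
of them than lines. -/
lemma dirCount_le {A : Finset (ℤ × ℤ)} {Q : ℤ × ℤ → Prop} [DecidablePred Q] {d : ℤ × ℤ}
    (g : ℤ × ℤ → ℤ) (lo : ℤ) (k : ℕ)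
    (hmem : ∀ u ∈ A, Q (u + d) → lo ≤ g u ∧ g u < lo + k)
    (hinj : ∀ u ∈ A, ∀ v ∈ A, Q (u + d) → Q (v + d) → g u = g v → u = v) :
    dirCount A Q d ≤ k := by
  have : k = (Finset.Ico lo (lo + k)).card := by simp
  rw [this, dirCount]
  refine Finset.card_le_card_of_injOn g ?_ ?_
  · intro u hu
    simp only [Finset.coe_filter, Set.mem_ofPred_eq] at hu
    simpa using hmem u hu.1 hu.2
  · intro u hu v hv huv
    simp only [Finset.coe_filter, Set.mem_ofPred_eq] at hu hv
    exact hinj u hu.1 v hv.1 hu.2 hv.2 huv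

/-- A row- and column-convex set in a `p × q` box has perimeter at most `2(p + q)`. -/
lemma edgeP_le (X : Finset (ℤ × ℤ)) (lo : ℤ) (p q : ℕ)
    (hbox : ∀ x y, (x, y) ∈ X → lo ≤ x ∧ x < lo + p ∧ 0 ≤ y ∧ y < q)
    (hrow : ∀ x x' z y, (x, y) ∈ X → (x', y) ∈ X → x ≤ z → z ≤ x' → (z, y) ∈ X)
    (hcol : ∀ x y y' z, (x, y) ∈ X → (x, y') ∈ X → y ≤ z → z ≤ y' → (x, z) ∈ X) :
    edgeP X ≤ 2 * (p + q) := by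
  have h1 : dirCount X (· ∉ X) (1, 0) ≤ q := by
    refine dirCount_le Prod.snd 0 q ?_ ?_
    · rintro ⟨x, y⟩ hu -
      have := hbox x y hu
      simp only
      omega
    · rintro ⟨x, y⟩ hu ⟨x', y'⟩ hv hu' hv' (rfl : y = y')
      simp only [Prod.mk_add_mk, add_zero] at hu' hv'
      rcases lt_trichotomy x x' with h | rfl | h
      · exact absurd (hrow x x' (x + 1) y hu hv (by omega) (by omega)) hu'
      · rfl
      · exact absurd (hrow x' x (x' + 1) y hv hu (by omega) (by omega)) hv'
  have h2 : dirCount X (· ∉ X) (-1, 0) ≤ q := by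
    refine dirCount_le Prod.snd 0 q ?_ ?_
    · rintro ⟨x, y⟩ hu -
      have := hbox x y hu
      simp only
      omega
    · rintro ⟨x, y⟩ hu ⟨x', y'⟩ hv hu' hv' (rfl : y = y')
      simp only [Prod.mk_add_mk, add_zero] at hu' hv'
      rcases lt_trichotomy x x' with h | rfl | h
      · exact absurd (hrow x x' (x' + -1) y hu hv (by omega) (by omega)) hv'
      · rfl
      · exact absurd (hrow x' x (x + -1) y hv hu (by omega) (by omega)) hu'
  have h3 : dirCount X (· ∉ X) (0, 1) ≤ p := by
    refine dirCount_le Prod.fst lo p ?_ ?_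
    · rintro ⟨x, y⟩ hu -
      have := hbox x y hu
      simp only
      omega
    · rintro ⟨x, y⟩ hu ⟨x', y'⟩ hv hu' hv' (rfl : x = x')
      simp only [Prod.mk_add_mk, add_zero] at hu' hv'
      rcases lt_trichotomy y y' with h | rfl | h
      · exact absurd (hcol x y y' (y + 1) hu hv (by omega) (by omega)) hu'
      · rfl
      · exact absurd (hcol x y' y (y' + 1) hv hu (by omega) (by omega)) hv'
  have h4 : dirCount X (· ∉ X) (0, -1) ≤ p := by
    refine dirCount_le Prod.fst lo p ?_ ?_
    · rintro ⟨x, y⟩ hu -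
      have := hbox x y hu
      simp only
      omega
    · rintro ⟨x, y⟩ hu ⟨x', y'⟩ hv hu' hv' (rfl : x = x')
      simp only [Prod.mk_add_mk, add_zero] at hu' hv'
      rcases lt_trichotomy y y' with h | rfl | h
      · exact absurd (hcol x y y' (y' + -1) hu hv (by omega) (by omega)) hv'
      · rfl
      · exact absurd (hcol x y' y (y + -1) hv hu (by omega) (by omega)) hu'
  rw [edgeP_eq]
  omega

/-! ### The two constructions -/

/-- `B` in the corner of a Young diagram `A ∪ B`. -/
lemma corner_config (n m p q r r' : ℕ) (hq : 0 < q) (hr' : 0 < r') (hpq : n + m ≤ p * q)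
    (hrr : m ≤ r * r') (hsub : young r' m ⊆ young q (n + m)) :
    ∃ A B : Finset (ℤ × ℤ), Disjoint A B ∧ A.card = n ∧ B.card = m ∧
      rhoDB A B ≤ 2 * (p + q) + (r + r') := by
  set U := young q (n + m) with hU
  set B := young r' m with hB
  refine ⟨U \ B, B, Finset.sdiff_disjoint, ?_, card_young _ _, ?_⟩
  · rw [Finset.card_sdiff_of_subset hsub, card_young, card_young]; omega
  have hnonneg : ∀ x y, (x, y) ∈ U → 0 ≤ x ∧ 0 ≤ y := fun x y h =>
    ⟨((mem_young hq x y).1 h).1, ((mem_young hq x y).1 h).2.1⟩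
  have hP : edgeP U ≤ 2 * (p + q) := by
    refine edgeP_le U 0 p q ?_ ?_ ?_
    · intro x y h
      have h1 := young_lt hq hpq h
      have h2 := (mem_young hq x y).1 h
      omega
    · intro x x' z y h h' hz hz'
      have := hnonneg x y h
      exact young_down hq h' (by omega) (by omega) hz' le_rfl
    · intro x y y' z h h' hz hz'
      have := hnonneg x y h
      exact young_down hq h' (by omega) (by omega) le_rfl hz'
  have hdown : ∀ x y x' y', (x, y) ∈ B → 0 ≤ x' → 0 ≤ y' → x' ≤ x → y' ≤ y → (x', y') ∈ B :=
    fun x y x' y' h => young_down hr' h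
  have c1 : dirCount (U \ B) (· ∈ B) (1, 0) = 0 := by
    refine dirCount_eq_zero ?_
    rintro ⟨x, y⟩ hu hv
    rw [Finset.mem_sdiff] at hu
    have := hnonneg x y hu.1
    exact hu.2 (hdown _ _ x y hv this.1 this.2 (by simp) (by simp))
  have c3 : dirCount (U \ B) (· ∈ B) (0, 1) = 0 := by
    refine dirCount_eq_zero ?_
    rintro ⟨x, y⟩ hu hv
    rw [Finset.mem_sdiff] at hu
    have := hnonneg x y hu.1
    exact hu.2 (hdown _ _ x y hv this.1 this.2 (by simp) (by simp))
  have c2 : dirCount (U \ B) (· ∈ B) (-1, 0) ≤ r' := by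
    refine dirCount_le Prod.snd 0 r' ?_ ?_
    · rintro ⟨x, y⟩ - hu'
      simp only [Prod.mk_add_mk, add_zero] at hu'
      have := (mem_young hr' _ _).1 hu'
      simp only
      omega
    · rintro ⟨x, y⟩ hu ⟨x', y'⟩ hv hu' hv' (rfl : y = y')
      simp only [Prod.mk_add_mk, add_zero, Finset.mem_sdiff] at hu hv hu' hv'
      have g1 := hnonneg _ _ hu.1
      have g2 := hnonneg _ _ hv.1
      rcases lt_trichotomy x x' with h | rfl | h
      · exact absurd (hdown _ _ x y hv' g1.1 g1.2 (by omega) le_rfl) hu.2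
      · rfl
      · exact absurd (hdown _ _ x' y hu' g2.1 g2.2 (by omega) le_rfl) hv.2
  have c4 : dirCount (U \ B) (· ∈ B) (0, -1) ≤ r := by
    refine dirCount_le Prod.fst 0 r ?_ ?_
    · rintro ⟨x, y⟩ - hu'
      simp only [Prod.mk_add_mk, add_zero] at hu'
      have h1 := (mem_young hr' _ _).1 hu'
      have h2 := young_lt hr' hrr hu'
      simp only
      omega
    · rintro ⟨x, y⟩ hu ⟨x', y'⟩ hv hu' hv' (rfl : x = x')
      simp only [Prod.mk_add_mk, add_zero, Finset.mem_sdiff] at hu hv hu' hv'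
      have g1 := hnonneg _ _ hu.1
      have g2 := hnonneg _ _ hv.1
      rcases lt_trichotomy y y' with h | rfl | h
      · exact absurd (hdown _ _ x y hv' g1.1 g1.2 le_rfl (by omega)) hu.2
      · rfl
      · exact absurd (hdown _ _ x y' hu' g2.1 g2.2 le_rfl (by omega)) hv.2
  rw [rhoDB, Finset.sdiff_union_of_subset hsub, crossE_eq]
  omega

/-- `B` glued to the first column of a Young diagram `A`. -/
lemma side_config (n m p q w s : ℕ) (hs : 0 < s) (hsq : s ≤ q) (hpq : n ≤ p * q)
    (hws : m ≤ w * s) :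
    ∃ A B : Finset (ℤ × ℤ), Disjoint A B ∧ A.card = n ∧ B.card = m ∧
      rhoDB A B ≤ 2 * (p + q) + (s + 2 * w) := by
  have hq : 0 < q := by omega
  set A := young q n with hA
  set B := (young s m).image (fun u => (-1 - u.1, u.2)) with hB
  have hBmem : ∀ x y, (x, y) ∈ B ↔ (-1 - x, y) ∈ young s m := by
    intro x y
    simp only [hB, Finset.mem_image, Prod.mk.injEq, Prod.exists]
    constructor
    · rintro ⟨a, b, h, rfl, rfl⟩
      simpa using h
    · intro h
      exact ⟨_, _, h, by ring, rfl⟩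
  have hAbd : ∀ x y, (x, y) ∈ A → 0 ≤ x ∧ x < p ∧ 0 ≤ y ∧ y < q := by
    intro x y h
    have h1 := young_lt hq hpq h
    have h2 := (mem_young hq x y).1 h
    omega
  have hBbd : ∀ x y, (x, y) ∈ B → x < 0 ∧ -w ≤ x ∧ 0 ≤ y ∧ y < s := by
    intro x y h
    rw [hBmem] at h
    have h1 := young_lt hs hws h
    have h2 := (mem_young hs _ _).1 h
    omega
  have hdisj : Disjoint A B := by
    rw [Finset.disjoint_left]
    rintro ⟨x, y⟩ h h'
    have := hAbd x y h
    have := hBbd x y h'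
    omega
  refine ⟨A, B, hdisj, card_young _ _, ?_, ?_⟩
  · rw [hB, Finset.card_image_of_injective, card_young]
    rintro ⟨x, y⟩ ⟨x', y'⟩ h
    simp only [Prod.mk.injEq] at h ⊢
    omega
  have hAdown : ∀ x y x' y', (x, y) ∈ A → 0 ≤ x' → 0 ≤ y' → x' ≤ x → y' ≤ y → (x', y') ∈ A :=
    fun x y x' y' h => young_down hq h
  have hBdown : ∀ x y x' y', (x, y) ∈ B → x' < 0 → 0 ≤ y' → x ≤ x' → y' ≤ y → (x', y') ∈ B := by
    intro x y x' y' h h1 h2 h3 h4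
    rw [hBmem] at h ⊢
    exact young_down hs h (by omega) h2 (by omega) h4
  have hP : edgeP (A ∪ B) ≤ 2 * ((w + p) + q) := by
    refine edgeP_le (A ∪ B) (-w) (w + p) q ?_ ?_ ?_
    · intro x y h
      rcases Finset.mem_union.1 h with h | h
      · have := hAbd x y h
        push_cast
        omega
      · have := hBbd x y h
        push_cast
        omega
    · intro x x' z y h h' hz hz'
      rw [Finset.mem_union] at h h' ⊢
      rcases lt_or_ge z 0 with hz0 | hz0
      · right
        rcases h with h | h
        · have := hAbd x y h
          omega
        · exact hBdown x y z y h hz0 (hBbd x y h).2.2.1 hz le_rfl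
      · left
        rcases h' with h' | h'
        · exact hAdown x' y z y h' hz0 (hAbd x' y h').2.2.1 hz' le_rfl
        · have := hBbd x' y h'
          omega
    · intro x y y' z h h' hz hz'
      rw [Finset.mem_union] at h h' ⊢
      rcases h' with h' | h'
      · left
        have hx := hAbd x y' h'
        have hz0 : 0 ≤ z := by
          rcases h with h | h
          · have := hAbd x y h
            omega
          · have := hBbd x y h
            omega
        exact hAdown x y' x z h' hx.1 hz0 le_rfl hz'
      · right
        have hx := hBbd x y' h'
        have hz0 : 0 ≤ z := by
          rcases h with h | h
          · have := hAbd x y h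
            omega
          · have := hBbd x y h
            omega
        exact hBdown x y' x z h' hx.1 hz0 le_rfl hz'
  have c1 : dirCount A (· ∈ B) (1, 0) = 0 := by
    refine dirCount_eq_zero ?_
    rintro ⟨x, y⟩ hu hv
    have := hAbd x y hu
    have := hBbd _ _ hv
    omega
  have c3 : dirCount A (· ∈ B) (0, 1) = 0 := by
    refine dirCount_eq_zero ?_
    rintro ⟨x, y⟩ hu hv
    have := hAbd x y hu
    have := hBbd _ _ hv
    omega
  have c4 : dirCount A (· ∈ B) (0, -1) = 0 := by
    refine dirCount_eq_zero ?_
    rintro ⟨x, y⟩ hu hv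
    have := hAbd x y hu
    have := hBbd _ _ hv
    omega
  have c2 : dirCount A (· ∈ B) (-1, 0) ≤ s := by
    refine dirCount_le Prod.snd 0 s ?_ ?_
    · rintro ⟨x, y⟩ - hu'
      simp only [Prod.mk_add_mk, add_zero] at hu'
      have := hBbd _ _ hu'
      simp only
      omega
    · rintro ⟨x, y⟩ hu ⟨x', y'⟩ hv hu' hv' (rfl : y = y')
      simp only [Prod.mk_add_mk, add_zero] at hu' hv'
      have := hAbd _ _ hu
      have := hAbd _ _ hv
      have := hBbd _ _ hu'
      have := hBbd _ _ hv'
      exact Prod.ext (show x = x' by omega) rfl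
  rw [rhoDB, crossE_eq]
  omega

/-! ### Choosing the side lengths -/

/-- The properties of `T = ⌈2√N⌉` that are used. -/
lemma exists_ceil (N : ℕ) (hN : 0 < N) :
    ∃ T : ℕ, 4 * N ≤ T ^ 2 ∧ 0 < T ∧ (T - 1) ^ 2 < 4 * N ∧ (T : ℝ) < 2 * √N + 1 := by
  have hN' : (0 : ℝ) < N := by exact_mod_cast hN
  have hpos : 0 < √(N : ℝ) := Real.sqrt_pos.2 hN'
  have hsq : √(N : ℝ) ^ 2 = N := Real.sq_sqrt hN'.le
  have hle := Nat.le_ceil (2 * √(N : ℝ))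
  have hlt := Nat.ceil_lt_add_one (a := 2 * √(N : ℝ)) (by positivity)
  have hT : 0 < ⌈2 * √(N : ℝ)⌉₊ := Nat.ceil_pos.2 (by positivity)
  generalize ⌈2 * √(N : ℝ)⌉₊ = T at *
  refine ⟨T, ?_, hT, ?_, hlt⟩
  · have : (4 : ℝ) * N ≤ (T : ℝ) ^ 2 := by nlinarith
    exact_mod_cast this
  · obtain ⟨k, rfl⟩ : ∃ k, T = k + 1 := ⟨T - 1, by omega⟩
    push_cast at hlt
    have hk : (k : ℝ) < 2 * √N := by linarith
    have : (k : ℝ) ^ 2 < 4 * N := by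
      have h0 : (0 : ℝ) ≤ k := by positivity
      nlinarith
    rw [Nat.add_sub_cancel]
    exact_mod_cast this

/-- `2⌈u⌉ + ⌈v⌉ ≤ ⌈2u + v⌉ + 2`. -/
lemma ceil_bound {R T t : ℕ} {u v F : ℝ} (hR : R ≤ 2 * T + t) (hT : (T : ℝ) < u + 1)
    (ht : (t : ℝ) < v + 1) (hF : F = 2 * u + v) : (R : ℤ) ≤ ⌈F⌉ + 2 := by
  have hR' : (R : ℝ) ≤ 2 * T + t := by exact_mod_cast hR
  have hc := Int.le_ceil F
  have : ((R : ℤ) : ℝ) < ((⌈F⌉ + 3 : ℤ) : ℝ) := by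
    push_cast
    linarith
  have := Int.cast_lt.1 this
  omega

lemma upper_first (n m : ℕ) (hm : 0 < m) (hnm : 2 * m ≤ n) :
    ∃ A B : Finset (ℤ × ℤ), Disjoint A B ∧ A.card = n ∧ B.card = m ∧
      (rhoDB A B : ℤ) ≤ ⌈4 * √((n : ℝ) + m) + 2 * √m⌉ + 2 := by
  obtain ⟨T, hT1, hT0, hT2, hT3⟩ := exists_ceil (n + m) (by omega)
  obtain ⟨t, ht1, ht0, ht2, ht3⟩ := exists_ceil m hm
  have hTt : t + 2 ≤ T := by
    by_contra hc
    obtain ⟨k, rfl⟩ : ∃ k, t = k + 1 := ⟨t - 1, by omega⟩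
    rw [Nat.add_sub_cancel] at ht2
    have hTk : T ≤ k + 2 := by omega
    have hk3 : k < 3 := by nlinarith
    interval_cases k
    · omega
    · interval_cases T <;> omega
    · interval_cases T <;> omega
  obtain ⟨p, q, hpqT, hpq, hqp⟩ : ∃ p q, p + q = T ∧ p ≤ q ∧ q ≤ p + 1 :=
    ⟨T / 2, (T + 1) / 2, by omega, by omega, by omega⟩
  obtain ⟨r, r', hrt, hrr, hr'r⟩ : ∃ r r', r + r' = t ∧ r ≤ r' ∧ r' ≤ r + 1 :=
    ⟨t / 2, (t + 1) / 2, by omega, by omega, by omega⟩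
  have hNpq : n + m ≤ p * q := by
    subst hpqT
    obtain rfl | rfl : q = p ∨ q = p + 1 := by omega
    · nlinarith
    · nlinarith
  have hmrr : m ≤ r * r' := by
    subst hrt
    obtain rfl | rfl : r' = r ∨ r' = r + 1 := by omega
    · nlinarith
    · nlinarith
  have hr'pos : 0 < r' := by omega
  have hrp : r + 1 ≤ p := by omega
  have hrq : r' + 1 ≤ q := by omega
  -- All columns but the last of the big diagram are full.
  have hfull : (p - 1) * q ≤ n + m := by
    obtain ⟨j, rfl⟩ : ∃ j, p = j + 1 := ⟨p - 1, by omega⟩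
    subst hpqT
    rw [Nat.add_sub_cancel]
    obtain rfl | rfl : q = j + 1 ∨ q = j + 1 + 1 := by omega
    · rw [show j + 1 + (j + 1) - 1 = 2 * j + 1 by omega] at hT2
      nlinarith
    · rw [show j + 1 + (j + 1 + 1) - 1 = 2 * j + 2 by omega] at hT2
      nlinarith
  have hsub : young r' m ⊆ young q (n + m) := by
    rintro ⟨x, y⟩ h
    have hx := young_lt hr'pos hmrr h
    rw [mem_young hr'pos] at h
    rw [mem_young (by omega)]
    refine ⟨h.1, h.2.1, by omega, ?_⟩
    obtain ⟨j, rfl⟩ : ∃ j, p = j + 1 := ⟨p - 1, by omega⟩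
    rw [Nat.add_sub_cancel] at hfull
    have hfull' : (j : ℤ) * q ≤ ((n + m : ℕ) : ℤ) := by exact_mod_cast hfull
    have : (q : ℤ) * (x + 1) ≤ q * j := mul_le_mul_of_nonneg_left (by omega) (by positivity)
    nlinarith
  obtain ⟨A, B, hd, hA, hB, hρ⟩ := corner_config n m p q r r' (by omega) hr'pos hNpq hmrr hsub
  rw [hpqT, hrt] at hρ
  push_cast at hT3
  exact ⟨A, B, hd, hA, hB, ceil_bound hρ hT3 ht3 (by ring)⟩

lemma upper_second (n m : ℕ) (hm : 0 < m) (hnm : 2 * m ≤ n) :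
    ∃ A B : Finset (ℤ × ℤ), Disjoint A B ∧ A.card = n ∧ B.card = m ∧
      (rhoDB A B : ℤ) ≤ ⌈4 * √(n : ℝ) + 2 * √(2 * m)⌉ + 2 := by
  obtain ⟨T, hT1, hT0, hT2, hT3⟩ := exists_ceil n (by omega)
  obtain ⟨t, ht1, ht0, ht2, ht3⟩ := exists_ceil (2 * m) (by omega)
  have htT : t ≤ T := by
    by_contra hc
    have : T ≤ t - 1 := by omega
    have := Nat.pow_le_pow_left this 2
    omega
  -- Parity makes an even second side `2w` possible without loss.
  obtain ⟨s, w, hsw, hst, hmws⟩ : ∃ s w, s + 2 * w = t ∧ s ≤ (t + 1) / 2 ∧ m ≤ w * s := by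
    obtain ⟨j, hj⟩ : ∃ j, j = t / 4 := ⟨_, rfl⟩
    obtain h | h | h | h : t = 4 * j ∨ t = 4 * j + 1 ∨ t = 4 * j + 2 ∨ t = 4 * j + 3 := by omega
    · exact ⟨2 * j, j, by omega, by omega, by subst h; nlinarith⟩
    · exact ⟨2 * j + 1, j, by omega, by omega, by subst h; nlinarith⟩
    · exact ⟨2 * j, j + 1, by omega, by omega, by subst h; nlinarith⟩
    · exact ⟨2 * j + 1, j + 1, by omega, by omega, by subst h; nlinarith⟩
  obtain ⟨p, q, hpqT, hpq, hqp⟩ : ∃ p q, p + q = T ∧ p ≤ q ∧ q ≤ p + 1 :=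
    ⟨T / 2, (T + 1) / 2, by omega, by omega, by omega⟩
  have hNpq : n ≤ p * q := by
    subst hpqT
    obtain rfl | rfl : q = p ∨ q = p + 1 := by omega
    · nlinarith
    · nlinarith
  have hspos : 0 < s := by
    rcases Nat.eq_zero_or_pos s with rfl | h
    · omega
    · exact h
  obtain ⟨A, B, hd, hA, hB, hρ⟩ :=
    side_config n m p q w s hspos (by omega) hNpq hmws
  rw [hpqT, hsw] at hρ
  push_cast at ht3
  exact ⟨A, B, hd, hA, hB, ceil_bound hρ hT3 ht3 (by ring)⟩

theorem stmt0 (n m : ℕ) (hn : 0 < n) (hm : 0 < m)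
    (hratio : (m : ℝ) / n ≤ 1 / 2) :
    (∀ A B : Finset (ℤ × ℤ), Disjoint A B → A.Nonempty → B.Nonempty →
      A.card = n → B.card = m → ⌈rhoCont n m⌉ ≤ (rhoDB A B : ℤ)) ∧
    (∃ A B : Finset (ℤ × ℤ), Disjoint A B ∧ A.Nonempty ∧ B.Nonempty ∧
      A.card = n ∧ B.card = m ∧ (rhoDB A B : ℤ) ≤ ⌈rhoCont n m⌉ + 2) := by
  have hnm : 2 * m ≤ n := by
    have hn' : (0 : ℝ) < n := by exact_mod_cast hn
    rw [div_le_iff₀ hn'] at hratio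
    have : (2 : ℝ) * m ≤ n := by linarith
    exact_mod_cast this
  constructor
  · intro A B h _ _ hA hB
    exact Int.ceil_le.2 (by exact_mod_cast lower_bound n m hn hm A B h hA hB)
  · obtain ⟨A, B, hd, hA, hB, hρ⟩ : ∃ A B : Finset (ℤ × ℤ), Disjoint A B ∧ A.card = n ∧
        B.card = m ∧ (rhoDB A B : ℤ) ≤ ⌈rhoCont n m⌉ + 2 := by
      unfold rhoCont
      split_ifs
      · exact upper_first n m hm hnm
      · exact upper_second n m hm hnm
    exact ⟨A, B, hd, Finset.card_pos.1 (by omega), Finset.card_pos.1 (by omega), hA, hB, hρ⟩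
end

section
/- Let a, b, l be positive integers with l ≤ a·b. Then there exists a finite set S ⊆ {0,1,…,a−1} × {0,1,…,b−1} ⊆ ℤ² with |S| = l and edge perimeter P(S) ≤ 2(a+b). (That is, the volume of an integer-sided a × b lattice rectangle can be reduced to any prescribed integer value l without increasing the perimeter beyond that of the rectangle.) -/
/-- Deleting a point whose right and upper neighbors are outside the set does not increase the
edge perimeter. -/
lemma edgeP_erase_le (S : Finset (ℤ × ℤ)) (v : ℤ × ℤ) (hv : v ∈ S)
    (h1 : (v.1 + 1, v.2) ∉ S) (h2 : (v.1, v.2 + 1) ∉ S) :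
    edgeP (S.erase v) ≤ edgeP S := by
  have hout : 2 ≤ ((nbrs v).filter (fun w => w ∉ S)).card := by
    have hsub : ({(v.1 + 1, v.2), (v.1, v.2 + 1)} : Finset (ℤ × ℤ)) ⊆
        (nbrs v).filter (fun w => w ∉ S) := by
      intro w hw
      simp only [Finset.mem_insert, Finset.mem_singleton] at hw
      rcases hw with rfl | rfl <;> simp [nbrs, h1, h2]
    have hc := Finset.card_le_card hsub
    rwa [Finset.card_pair (by simp)] at hc
  have hin : ((S.erase v).filter (fun u => v ∈ nbrs u)).card ≤ 2 := by
    have hsub : (S.erase v).filter (fun u => v ∈ nbrs u) ⊆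
        ({(v.1 - 1, v.2), (v.1, v.2 - 1)} : Finset (ℤ × ℤ)) := by
      rintro ⟨x, y⟩ hu
      obtain ⟨p, q⟩ := v
      simp only [Finset.mem_filter, Finset.mem_erase, nbrs, Finset.mem_insert,
        Finset.mem_singleton, Prod.mk.injEq] at hu ⊢
      obtain ⟨⟨-, hS⟩, h | h | h | h⟩ := hu
      · left; omega
      · exact absurd (by convert hS using 2 <;> dsimp only <;> omega) h1
      · right; omega
      · exact absurd (by convert hS using 2 <;> dsimp only <;> omega) h2
    exact (Finset.card_le_card hsub).trans Finset.card_le_two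
  have hterm : ∀ u ∈ S.erase v, ((nbrs u).filter (fun w => w ∉ S.erase v)).card ≤
      ((nbrs u).filter (fun w => w ∉ S)).card + if v ∈ nbrs u then 1 else 0 := by
    intro u _
    have hsub : (nbrs u).filter (fun w => w ∉ S.erase v) ⊆
        (nbrs u).filter (fun w => w ∉ S) ∪ (nbrs u).filter (fun w => w = v) := by
      intro w hw
      simp only [Finset.mem_filter, Finset.mem_erase, Finset.mem_union] at hw ⊢
      tauto
    refine (Finset.card_le_card hsub).trans ((Finset.card_union_le _ _).trans ?_)
    rw [Finset.filter_eq']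
    split_ifs <;> simp
  have hsum := Finset.sum_le_sum hterm
  rw [Finset.sum_add_distrib, ← Finset.card_filter] at hsum
  have hsplit := Finset.add_sum_erase S
    (fun u => ((nbrs u).filter (fun w => w ∉ S)).card) hv
  unfold edgeP
  omega

/-- The perimeter is bounded by counting, for each of the four directions, the points of the
set that have an outside neighbor in that direction. -/
lemma edgeP_le_directions (S : Finset (ℤ × ℤ)) :
    edgeP S ≤ (S.filter (fun u => (u.1 + 1, u.2) ∉ S)).card +
      (S.filter (fun u => (u.1 - 1, u.2) ∉ S)).card +
      (S.filter (fun u => (u.1, u.2 + 1) ∉ S)).card +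
      (S.filter (fun u => (u.1, u.2 - 1) ∉ S)).card := by
  simp only [Finset.card_filter, ← Finset.sum_add_distrib]
  refine Finset.sum_le_sum fun u _ => ?_
  have hins : ∀ (w : ℤ × ℤ) (T : Finset (ℤ × ℤ)),
      ((insert w T).filter (fun z => z ∉ S)).card ≤
        (if w ∉ S then 1 else 0) + (T.filter (fun z => z ∉ S)).card := by
    intro w T
    rw [Finset.filter_insert]
    by_cases hw : w ∈ S
    · simp [hw]
    · have := Finset.card_insert_le w (T.filter (fun z => z ∉ S))
      simp only [hw, not_false_eq_true, if_true]
      omega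
  have e1 := hins (u.1 + 1, u.2) {(u.1 - 1, u.2), (u.1, u.2 + 1), (u.1, u.2 - 1)}
  have e2 := hins (u.1 - 1, u.2) {(u.1, u.2 + 1), (u.1, u.2 - 1)}
  have e3 := hins (u.1, u.2 + 1) {(u.1, u.2 - 1)}
  have e4 := hins (u.1, u.2 - 1) ∅
  simp only [insert_empty_eq, Finset.filter_empty, Finset.card_empty] at e4
  unfold nbrs
  omega

lemma edgeP_rect_le (a b : ℕ) :
    edgeP ((Finset.Ico (0 : ℤ) (a : ℤ)) ×ˢ (Finset.Ico (0 : ℤ) (b : ℤ))) ≤ 2 * (a + b) := by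
  set R := (Finset.Ico (0 : ℤ) (a : ℤ)) ×ˢ (Finset.Ico (0 : ℤ) (b : ℤ)) with hR
  -- The points with an outside neighbor in a given direction lie on one side of the rectangle.
  have hcol : ∀ (c : ℤ) (p : ℤ × ℤ → Prop) [DecidablePred p],
      (∀ u ∈ R, p u → u.1 = c) → (R.filter p).card ≤ b := by
    intro c p _ h
    have hsub : R.filter p ⊆ {c} ×ˢ Finset.Ico (0 : ℤ) (b : ℤ) := by
      intro u hu
      rw [Finset.mem_filter] at hu
      have := h u hu.1 hu.2
      simp only [hR, Finset.mem_product] at hu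
      exact Finset.mem_product.2 ⟨Finset.mem_singleton.2 this, hu.1.2⟩
    simpa using Finset.card_le_card hsub
  have hrow : ∀ (c : ℤ) (p : ℤ × ℤ → Prop) [DecidablePred p],
      (∀ u ∈ R, p u → u.2 = c) → (R.filter p).card ≤ a := by
    intro c p _ h
    have hsub : R.filter p ⊆ Finset.Ico (0 : ℤ) (a : ℤ) ×ˢ {c} := by
      intro u hu
      rw [Finset.mem_filter] at hu
      have := h u hu.1 hu.2
      simp only [hR, Finset.mem_product] at hu
      exact Finset.mem_product.2 ⟨hu.1.1, Finset.mem_singleton.2 this⟩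
    simpa using Finset.card_le_card hsub
  have d1 := hcol (a - 1) (fun u => (u.1 + 1, u.2) ∉ R) (by
    intro u; simp only [hR, Finset.mem_product, Finset.mem_Ico]; omega)
  have d2 := hcol 0 (fun u => (u.1 - 1, u.2) ∉ R) (by
    intro u; simp only [hR, Finset.mem_product, Finset.mem_Ico]; omega)
  have d3 := hrow (b - 1) (fun u => (u.1, u.2 + 1) ∉ R) (by
    intro u; simp only [hR, Finset.mem_product, Finset.mem_Ico]; omega)
  have d4 := hrow 0 (fun u => (u.1, u.2 - 1) ∉ R) (by
    intro u; simp only [hR, Finset.mem_product, Finset.mem_Ico]; omega)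
  have := edgeP_le_directions R
  omega

/-- Every finite set has subsets of all smaller cardinalities with no larger perimeter. -/
lemma exists_subset_edgeP_le (S : Finset (ℤ × ℤ)) (l : ℕ) (hl : l ≤ S.card) :
    ∃ T ⊆ S, T.card = l ∧ edgeP T ≤ edgeP S := by
  induction hl using Nat.decreasingInduction with
  | self => exact ⟨S, subset_rfl, rfl, le_rfl⟩
  | of_succ k _ ih =>
    obtain ⟨T, hTS, hcard, hP⟩ := ih
    obtain ⟨v, hv, hmax⟩ := T.exists_max_image (fun u => u.1 + u.2)
      (Finset.card_pos.1 (by omega))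
    refine ⟨T.erase v, (T.erase_subset v).trans hTS, ?_,
      (edgeP_erase_le T v hv ?_ ?_).trans hP⟩
    · rw [Finset.card_erase_of_mem hv, hcard, Nat.add_sub_cancel]
    · intro h
      have := hmax _ h
      simp only at this
      omega
    · intro h
      have := hmax _ h
      simp only at this
      omega

theorem stmt5 (a b l : ℕ) (ha : 0 < a) (hb : 0 < b) (hl : 0 < l)
    (hle : l ≤ a * b) :
    ∃ S : Finset (ℤ × ℤ),
      S ⊆ (Finset.Ico (0 : ℤ) (a : ℤ)) ×ˢ (Finset.Ico (0 : ℤ) (b : ℤ)) ∧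
      S.card = l ∧ edgeP S ≤ 2 * (a + b) := by
  obtain ⟨T, hT, hcard, hP⟩ := exists_subset_edgeP_le
    ((Finset.Ico (0 : ℤ) (a : ℤ)) ×ˢ (Finset.Ico (0 : ℤ) (b : ℤ))) l (by simpa using hle)
  exact ⟨T, hT, hcard, hP.trans (edgeP_rect_le a b)⟩
end

section
/- Let n, m be positive integers with m/n ≤ α₀ = (688 − 480√2)/49. Then there exist disjoint finite sets A, B ⊆ ℤ² with |A| = n, |B| = m, and ρ_DB(A,B) ≤ ⌈4√(n+m) + 2√m⌉ + 2. (Here 4√(n+m) + 2√m is the continuous ℓ¹ double bubble minimum for volumes n and m when m/n ≤ α₀.) -/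
/-- `S` is a Young diagram (a down-closed subset of the quadrant `x, y ≥ 0`) contained in the
box `[0, w) × [0, k)`. -/
structure IsYoung (S : Finset (ℤ × ℤ)) (w k : ℕ) : Prop where
  box : ∀ x y : ℤ, (x, y) ∈ S → 0 ≤ x ∧ x < w ∧ 0 ≤ y ∧ y < k
  down : ∀ x y x' y' : ℤ, (x, y) ∈ S → 0 ≤ x' → x' ≤ x → 0 ≤ y' → y' ≤ y → (x', y') ∈ S

/-- The first `M` cells of the quadrant, filled column by column with columns of height `k`. -/
def stair (k M : ℕ) : Finset (ℤ × ℤ) :=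
  (Finset.range M).image fun i => (((i / k : ℕ) : ℤ), ((i % k : ℕ) : ℤ))

lemma card_stair (k M : ℕ) : (stair k M).card = M := by
  unfold stair
  rw [Finset.card_image_of_injective, Finset.card_range]
  intro i j h
  simp only [Prod.mk.injEq, Nat.cast_inj] at h
  rw [← Nat.div_add_mod i k, ← Nat.div_add_mod j k, h.1, h.2]

lemma mem_stair {k M : ℕ} (hk : 0 < k) (x y : ℤ) :
    (x, y) ∈ stair k M ↔ 0 ≤ x ∧ 0 ≤ y ∧ y < k ∧ x * k + y < M := by
  simp only [stair, Finset.mem_image, Finset.mem_range, Prod.mk.injEq]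
  constructor
  · rintro ⟨i, hi, rfl, rfl⟩
    refine ⟨by positivity, by positivity, by exact_mod_cast Nat.mod_lt i hk, ?_⟩
    have := Nat.div_add_mod i k
    rw [mul_comm] at this
    exact_mod_cast this.symm ▸ hi
  · rintro ⟨hx, hy, hyk, h⟩
    lift x to ℕ using hx
    lift y to ℕ using hy
    norm_cast at hyk h
    refine ⟨x * k + y, h, ?_, ?_⟩
    · rw [add_comm, Nat.add_mul_div_right _ _ hk, Nat.div_eq_of_lt hyk, zero_add]
    · rw [add_comm, Nat.add_mul_mod_self_right, Nat.mod_eq_of_lt hyk]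

lemma isYoung_stair {k M w : ℕ} (hk : 0 < k) (hM : M ≤ w * k) : IsYoung (stair k M) w k := by
  have hk' : (0 : ℤ) < k := by exact_mod_cast hk
  have hM' : (M : ℤ) ≤ w * k := by exact_mod_cast hM
  constructor
  · intro x y h
    obtain ⟨hx, hy, hyk, h⟩ := (mem_stair hk x y).1 h
    exact ⟨hx, by nlinarith, hy, hyk⟩
  · intro x y x' y' h hx' hxx hy' hyy
    obtain ⟨hx, hy, hyk, h⟩ := (mem_stair hk x y).1 h
    exact (mem_stair hk x' y').2 ⟨hx', hy', by omega, by nlinarith⟩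

/-- Double counting: the pairs `(u, v)` with `u ∈ A`, `v` a neighbor of `u` and `p v`, sorted by
the direction of `v - u`. -/
lemma sum_nbrs_le (A : Finset (ℤ × ℤ)) (p : ℤ × ℤ → Prop) [DecidablePred p] :
    ∑ u ∈ A, ((nbrs u).filter p).card ≤
      (A.filter fun u => p (u.1 + 1, u.2)).card + (A.filter fun u => p (u.1 - 1, u.2)).card +
      (A.filter fun u => p (u.1, u.2 + 1)).card + (A.filter fun u => p (u.1, u.2 - 1)).card := by
  have key : ∀ (a : ℤ × ℤ) (s : Finset (ℤ × ℤ)),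
      ((insert a s).filter p).card ≤ (if p a then 1 else 0) + (s.filter p).card := by
    intro a s
    rw [Finset.filter_insert]
    split_ifs
    · exact (Finset.card_insert_le _ _).trans (by omega)
    · omega
  simp only [Finset.card_filter _ A, ← Finset.sum_add_distrib]
  refine Finset.sum_le_sum fun u _ => ?_
  have h1 := key (u.1 + 1, u.2) {(u.1 - 1, u.2), (u.1, u.2 + 1), (u.1, u.2 - 1)}
  have h2 := key (u.1 - 1, u.2) {(u.1, u.2 + 1), (u.1, u.2 - 1)}
  have h3 := key (u.1, u.2 + 1) {(u.1, u.2 - 1)}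
  have h4 := key (u.1, u.2 - 1) ∅
  rw [Finset.filter_empty, Finset.card_empty, insert_empty_eq] at h4
  unfold nbrs
  omega

lemma card_le_of_fst {T : Finset (ℤ × ℤ)} {w : ℕ} (h : ∀ x y, (x, y) ∈ T → 0 ≤ x ∧ x < w)
    (hinj : ∀ x y y', (x, y) ∈ T → (x, y') ∈ T → y ≤ y') : T.card ≤ w := by
  have : T.card ≤ (Finset.Ico (0 : ℤ) w).card := by
    refine Finset.card_le_card_of_injOn Prod.fst ?_ ?_
    · rintro ⟨x, y⟩ hu
      simpa using h x y hu
    · rintro ⟨x, y⟩ hu ⟨x', y'⟩ hv (rfl : x = x')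
      rw [le_antisymm (hinj _ _ _ hu hv) (hinj _ _ _ hv hu)]
  simpa using this

lemma card_le_of_snd {T : Finset (ℤ × ℤ)} {k : ℕ} (h : ∀ x y, (x, y) ∈ T → 0 ≤ y ∧ y < k)
    (hinj : ∀ x x' y, (x, y) ∈ T → (x', y) ∈ T → x ≤ x') : T.card ≤ k := by
  have : T.card ≤ (Finset.Ico (0 : ℤ) k).card := by
    refine Finset.card_le_card_of_injOn Prod.snd ?_ ?_
    · rintro ⟨x, y⟩ hu
      simpa using h x y hu
    · rintro ⟨x, y⟩ hu ⟨x', y'⟩ hv (rfl : y = y')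
      rw [le_antisymm (hinj _ _ _ hu hv) (hinj _ _ _ hv hu)]
  simpa using this

/-- Each row and each column of a Young diagram is an interval, so it contributes two boundary
edges. -/
lemma edgeP_le_s6 {S : Finset (ℤ × ℤ)} {w k : ℕ} (hS : IsYoung S w k) : edgeP S ≤ 2 * (w + k) := by
  refine (sum_nbrs_le S _).trans ?_
  have h1 : (S.filter fun u => (u.1 + 1, u.2) ∉ S).card ≤ k := by
    refine card_le_of_snd (fun x y h => ?_) (fun x x' y h h' => ?_)
    · have := hS.box x y (Finset.mem_filter.1 h).1
      omega
    · simp only [Finset.mem_filter] at h h'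
      by_contra! hlt
      have := hS.box _ _ h'.1
      exact h'.2 (hS.down x y _ _ h.1 (by omega) (by omega) (by omega) le_rfl)
  have h2 : (S.filter fun u => (u.1 - 1, u.2) ∉ S).card ≤ k := by
    refine card_le_of_snd (fun x y h => ?_) (fun x x' y h h' => ?_)
    · have := hS.box x y (Finset.mem_filter.1 h).1
      omega
    · simp only [Finset.mem_filter] at h h'
      by_contra! hlt
      have := hS.box _ _ h'.1
      exact h.2 (hS.down x y _ _ h.1 (by omega) (by omega) (by omega) le_rfl)
  have h3 : (S.filter fun u => (u.1, u.2 + 1) ∉ S).card ≤ w := by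
    refine card_le_of_fst (fun x y h => ?_) (fun x y y' h h' => ?_)
    · have := hS.box x y (Finset.mem_filter.1 h).1
      omega
    · simp only [Finset.mem_filter] at h h'
      by_contra! hlt
      have := hS.box _ _ h'.1
      exact h'.2 (hS.down x y _ _ h.1 (by omega) le_rfl (by omega) (by omega))
  have h4 : (S.filter fun u => (u.1, u.2 - 1) ∉ S).card ≤ w := by
    refine card_le_of_fst (fun x y h => ?_) (fun x y y' h h' => ?_)
    · have := hS.box x y (Finset.mem_filter.1 h).1
      omega
    · simp only [Finset.mem_filter] at h h'
      by_contra! hlt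
      have := hS.box _ _ h'.1
      exact h.2 (hS.down x y _ _ h.1 (by omega) le_rfl (by omega) (by omega))
  omega

/-- Within the quadrant, edges leave a Young diagram only to the right or upwards, at most once
per row and once per column. -/
lemma crossE_le {A B : Finset (ℤ × ℤ)} {w k : ℕ} (hB : IsYoung B w k) (hAB : Disjoint A B)
    (hA : ∀ x y : ℤ, (x, y) ∈ A → 0 ≤ x ∧ 0 ≤ y) : crossE A B ≤ w + k := by
  have hd : ∀ u, u ∈ A → u ∉ B := fun u hu hu' => Finset.disjoint_left.1 hAB hu hu'
  refine (sum_nbrs_le A _).trans ?_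
  have h1 : (A.filter fun u => (u.1 + 1, u.2) ∈ B).card = 0 := by
    rw [Finset.card_eq_zero, Finset.filter_eq_empty_iff]
    rintro ⟨x, y⟩ hu hv
    have := hA x y hu
    exact hd _ hu (hB.down _ _ _ _ hv (by omega) (by simp) (by omega) le_rfl)
  have h3 : (A.filter fun u => (u.1, u.2 + 1) ∈ B).card = 0 := by
    rw [Finset.card_eq_zero, Finset.filter_eq_empty_iff]
    rintro ⟨x, y⟩ hu hv
    have := hA x y hu
    exact hd _ hu (hB.down _ _ _ _ hv (by omega) le_rfl (by omega) (by simp))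
  have h2 : (A.filter fun u => (u.1 - 1, u.2) ∈ B).card ≤ k := by
    refine card_le_of_snd (fun x y h => ?_) (fun x x' y h h' => ?_)
    · have := hB.box _ _ (Finset.mem_filter.1 h).2
      omega
    · simp only [Finset.mem_filter] at h h'
      by_contra! hlt
      have := hA _ _ h'.1
      exact hd _ h'.1 (hB.down _ _ _ _ h.2 (by omega) (by omega) (by omega) le_rfl)
  have h4 : (A.filter fun u => (u.1, u.2 - 1) ∈ B).card ≤ w := by
    refine card_le_of_fst (fun x y h => ?_) (fun x y y' h h' => ?_)
    · have := hB.box _ _ (Finset.mem_filter.1 h).2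
      omega
    · simp only [Finset.mem_filter] at h h'
      by_contra! hlt
      have := hA _ _ h'.1
      exact hd _ h'.1 (hB.down _ _ _ _ h.2 (by omega) le_rfl (by omega) (by omega))
  omega

/-- Dimensions of a box of height `p + 1 = ⌈√M⌉` and width `w = ⌈M / (p + 1)⌉`, whose
semiperimeter `w + p + 1` is `⌈2√M⌉`. -/
lemma exists_dims_s6 {M : ℕ} (hM : 0 < M) :
    ∃ p w : ℕ, p * p < M ∧ M ≤ (p + 1) * (p + 1) ∧ w ≤ p + 1 ∧ M ≤ w * (p + 1) ∧
      ((w + p : ℕ) : ℝ) < 2 * Real.sqrt M := by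
  have h1 := Nat.sqrt_le (M - 1)
  have h2 := Nat.lt_succ_sqrt (M - 1)
  generalize Nat.sqrt (M - 1) = p at h1 h2
  rw [Nat.succ_eq_add_one] at h2
  have key : ∀ w : ℕ, (w + p) * (w + p) < 4 * M → ((w + p : ℕ) : ℝ) < 2 * Real.sqrt M := by
    intro w h
    have h' : ((w + p : ℕ) : ℝ) * ((w + p : ℕ) : ℝ) < 4 * M := by exact_mod_cast h
    have hs := Real.mul_self_sqrt (Nat.cast_nonneg (α := ℝ) M)
    refine lt_of_mul_self_lt_mul_self₀ (by positivity) ?_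
    linarith
  by_cases h : M ≤ p * (p + 1)
  · refine ⟨p, p, by omega, by omega, by omega, h, key p ?_⟩
    have : (p + p) * (p + p) = 4 * (p * p) := by ring
    omega
  · refine ⟨p, p + 1, by omega, by omega, le_rfl, by omega, key _ ?_⟩
    have : (p + 1 + p) * (p + 1 + p) = 4 * (p * (p + 1)) + 1 := by ring
    omega

theorem stmt6 (n m : ℕ) (hn : 0 < n) (hm : 0 < m)
    (hratio : (m : ℝ) / n ≤ (688 - 480 * Real.sqrt 2) / 49) :
    ∃ A B : Finset (ℤ × ℤ), Disjoint A B ∧ A.card = n ∧ B.card = m ∧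
      (rhoDB A B : ℤ) ≤ ⌈4 * Real.sqrt ((n : ℝ) + m) + 2 * Real.sqrt m⌉ + 2 := by
  have h5 : 5 * m ≤ n := by
    have hs : (1.413 : ℝ) ≤ Real.sqrt 2 := Real.le_sqrt_of_sq_le (by norm_num)
    have hn' : (0 : ℝ) < n := by exact_mod_cast hn
    have h : (m : ℝ) / n ≤ 1 / 5 := by linarith
    rw [div_le_div_iff₀ hn' (by norm_num)] at h
    have : (5 * m : ℝ) ≤ n := by linarith
    exact_mod_cast this
  obtain ⟨p, w, hp, hp', -, hw, hpw⟩ := exists_dims_s6 (M := n + m) (by omega)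
  obtain ⟨q, v, hq, -, hvq, hv, hqv⟩ := exists_dims_s6 hm
  have hU : IsYoung (stair (p + 1) (n + m)) w (p + 1) := isYoung_stair p.succ_pos hw
  have hB : IsYoung (stair (q + 1) m) v (q + 1) := isYoung_stair q.succ_pos hv
  have hqp : q ≤ p := by
    by_contra! h
    have : (p + 1) * (p + 1) ≤ q * q := Nat.mul_self_le_mul_self h
    omega
  -- The `(q + 1) × (q + 1)` box around `B` only meets full columns of the large staircase.
  have hfit : ((q : ℤ) + 1) * (p + 1) ≤ n + m := by
    have hp1 : (p : ℤ) * p + 1 ≤ n + m := by exact_mod_cast hp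
    have hq1 : (q : ℤ) * q + 1 ≤ m := by exact_mod_cast hq
    have h5' : 5 * (m : ℤ) ≤ n := by exact_mod_cast h5
    nlinarith [sq_nonneg ((p : ℤ) - 2 * q), sq_nonneg ((p : ℤ) - 2), sq_nonneg (2 * (q : ℤ) - 1)]
  have hsub : stair (q + 1) m ⊆ stair (p + 1) (n + m) := by
    rintro ⟨x, y⟩ h
    obtain ⟨hx, hxv, hy, hyq⟩ := hB.box x y h
    push_cast at hyq
    refine (mem_stair p.succ_pos x y).2 ⟨hx, hy, by push_cast; omega, ?_⟩
    have hxq : x ≤ q := by omega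
    have : x * ((p : ℤ) + 1) ≤ q * (p + 1) := by gcongr
    push_cast
    nlinarith
  refine ⟨stair (p + 1) (n + m) \ stair (q + 1) m, stair (q + 1) m, Finset.sdiff_disjoint,
    ?_, card_stair _ _, ?_⟩
  · rw [Finset.card_sdiff_of_subset hsub, card_stair, card_stair]
    omega
  have h1 := edgeP_le_s6 hU
  have h2 : crossE (stair (p + 1) (n + m) \ stair (q + 1) m) (stair (q + 1) m) ≤ v + (q + 1) := by
    refine crossE_le hB Finset.sdiff_disjoint fun x y h => ?_
    have := hU.box x y (Finset.mem_sdiff.1 h).1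
    omega
  have h3 : rhoDB (stair (p + 1) (n + m) \ stair (q + 1) m) (stair (q + 1) m) ≤
      2 * (w + (p + 1)) + (v + (q + 1)) := by
    rw [rhoDB, Finset.sdiff_union_of_subset hsub]
    omega
  have h4 : ((2 * (w + p) + (v + q) : ℕ) : ℤ) <
      ⌈4 * Real.sqrt ((n : ℝ) + m) + 2 * Real.sqrt m⌉ := by
    rw [Int.lt_ceil]
    push_cast at hpw hqv ⊢
    linarith
  omega
end

section
/- For every integer n > 6000 there exist positive integers x, y, z such that x·z ≥ n, y·z ≥ n, and 3z + 2(x + y) ≤ ⌈2√(12n)⌉ + 1. (These integers are the side lengths of a discrete double bubble configuration consisting of an x × z rectangle and a y × z rectangle sharing a vertical side of length z, with both volumes at least n and double bubble perimeter at most one more than the ceiling of the continuous minimum 2√(12n).) -/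
/-!
Take `x = y`, and let `Q = ⌈√(48 n)⌉ + 1` be the allowed perimeter. If `3 z + 4 x = Q`, then
`48 x z = Q ^ 2 - (6 z - Q) ^ 2`. The admissible `z` form a residue class modulo `4`, so one can be
chosen with `|6 z - Q| ≤ 12`, which costs at most `144`. On the other hand
`Q ^ 2 ≥ (√(48 n) + 1) ^ 2 ≥ 48 n + 2 √(48 n)`, and `2 √(48 n) > 144` for the `n` considered.
-/

/-- A balanced solution of `3 z + 4 x = Q`: the summands `3 z` and `4 x` differ by at most `12`. -/
lemma exists_balanced (Q : ℤ) :
    ∃ x z : ℤ, 3 * z + 4 * x = Q ∧ -12 ≤ 6 * z - Q ∧ 6 * z - Q ≤ 12 := by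
  -- `s` is the residue of `z` modulo `4` forced by `3 z ≡ Q`; the quotient rounds `(Q - 6 s) / 24`
  -- to a nearest integer.
  obtain ⟨s, hs⟩ : ∃ s : ℤ, s = (3 * Q) % 4 := ⟨_, rfl⟩
  obtain ⟨z, hz⟩ : ∃ z : ℤ, z = 4 * ((Q + 12 - 6 * s) / 24) + s := ⟨_, rfl⟩
  exact ⟨(Q - 3 * z) / 4, z, by omega, by omega, by omega⟩

theorem stmt8 (n : ℕ) (hn : n > 6000) :
    ∃ x y z : ℕ, 0 < x ∧ 0 < y ∧ 0 < z ∧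
      n ≤ x * z ∧ n ≤ y * z ∧
      ((3 * z + 2 * (x + y) : ℕ) : ℤ) ≤ ⌈2 * Real.sqrt (12 * n)⌉ + 1 := by
  obtain ⟨P, hP⟩ : ∃ P : ℤ, P = ⌈2 * Real.sqrt (12 * n)⌉ := ⟨_, rfl⟩
  rw [← hP]
  have hle : 2 * Real.sqrt (12 * n) ≤ (P : ℝ) := hP ▸ Int.le_ceil _
  have hs0 := Real.sqrt_nonneg (12 * (n : ℝ))
  have hP0 : 0 ≤ P := by
    have : (0 : ℝ) ≤ P := by linarith
    exact_mod_cast this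
  have hsq : 48 * (n : ℤ) ≤ P ^ 2 := by
    have h1 : Real.sqrt (12 * n) ^ 2 = 12 * n := Real.sq_sqrt (by positivity)
    have : 48 * (n : ℝ) ≤ (P : ℝ) ^ 2 := by nlinarith
    exact_mod_cast this
  have hn' : (6000 : ℤ) < n := by exact_mod_cast hn
  have hP500 : 500 ≤ P := by nlinarith
  obtain ⟨x, z, hxz, hl, hu⟩ := exists_balanced (P + 1)
  have hx : 0 < x := by omega
  have hz : 0 < z := by omega
  have hprod : (n : ℤ) ≤ x * z := by
    have h1 : 48 * (x * z) = (P + 1) ^ 2 - (6 * z - (P + 1)) ^ 2 := by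
      rw [← hxz]; ring
    have h2 : (6 * z - (P + 1)) ^ 2 ≤ 144 := by nlinarith
    nlinarith
  lift x to ℕ using hx.le
  lift z to ℕ using hz.le
  have hnat : n ≤ x * z := by exact_mod_cast hprod
  exact ⟨x, x, z, by omega, by omega, by omega, hnat, hnat, by push_cast; omega⟩
end

section
/- For real numbers n and x with n ≥ 1 and x < √(n/3) − 1/6, define ỹ₁(n,x) = (√(3n)·(1 + 2x) − 1 − 10x − 24x²)/(4√(3n) − 12x − 2). Then for all real N ≥ n ≥ 1 and all real x with x < √(n/3) − 1/6, one has ỹ₁(N,x) ≥ ỹ₁(n,x); that is, the upper boundary curve of the admissible region is monotone nondecreasing in the volume parameter n. -/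
/-! With `s = √(3n)`, the function `ytilde1 n x` is the Möbius function
`(a s + b) / (4 s + d)` of `s`, where `a = 1 + 2x`, `b = -(1 + 10x + 24x²)`, `d = -(12x + 2)`.
Its determinant `a d - 4 b` equals `2 (6x + 1)² ≥ 0`, and its denominator is positive at `√(3n)`,
hence on all of `[√(3n), ∞)`, so it is nondecreasing there. -/

/-- Upper boundary curve of the admissible region. -/
noncomputable def ytilde1 (n x : ℝ) : ℝ :=
  (Real.sqrt (3 * n) * (1 + 2 * x) - 1 - 10 * x - 24 * x ^ 2) /
    (4 * Real.sqrt (3 * n) - 12 * x - 2)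

theorem stmt9 (n N x : ℝ) (hn : 1 ≤ n) (hnN : n ≤ N)
    (hx : x < Real.sqrt (n / 3) - 1 / 6) :
    ytilde1 n x ≤ ytilde1 N x := by
  have hs : Real.sqrt (n / 3) = Real.sqrt (3 * n) / 3 := by
    rw [show n / 3 = 3 * n / 3 ^ 2 by ring, Real.sqrt_div (by linarith),
      Real.sqrt_sq (by norm_num)]
  have hle : Real.sqrt (3 * n) ≤ Real.sqrt (3 * N) := Real.sqrt_le_sqrt (by linarith)
  rw [hs] at hx
  unfold ytilde1
  rw [div_le_div_iff₀ (by linarith) (by linarith)]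
  -- The cross-multiplied difference is `(√(3N) - √(3n))` times the Möbius determinant.
  nlinarith [mul_nonneg (sub_nonneg.mpr hle) (sq_nonneg (6 * x + 1))]
end

section
/- For real numbers n and x with n ≥ 1 and x < √(n/3) − 1/6, define ỹ₂(n,x) = (√(3n)·(−1 + 2x) + 1 + 8x + 12x²)/(4√(3n) − 12x − 2). Then for all real N ≥ n ≥ 1 and all real x with x < √(n/3) − 1/6, one has ỹ₂(N,x) ≤ ỹ₂(n,x); that is, the lower boundary curve of the admissible region is monotone nonincreasing in the volume parameter n. -/
/-- Lower boundary curve of the admissible region. -/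
noncomputable def ytilde2 (n x : ℝ) : ℝ :=
  (Real.sqrt (3 * n) * (-1 + 2 * x) + 1 + 8 * x + 12 * x ^ 2) /
    (4 * Real.sqrt (3 * n) - 12 * x - 2)

theorem stmt10 (n N x : ℝ) (hn : 1 ≤ n) (hnN : n ≤ N)
    (hx : x < Real.sqrt (n / 3) - 1 / 6) :
    ytilde2 N x ≤ ytilde2 n x := by
  have hs : √(3 * n) = 3 * √(n / 3) := by
    rw [show 3 * n = 3 ^ 2 * (n / 3) by ring, Real.sqrt_mul (by norm_num),
      Real.sqrt_sq (by norm_num)]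
  have hsS : √(3 * n) ≤ √(3 * N) := Real.sqrt_le_sqrt (by linarith)
  unfold ytilde2
  rw [div_le_div_iff₀ (by linarith) (by linarith)]
  -- As functions of `s = √(3n)`, both sides are values of a Möbius map `(a s + b) / (4 s - c)`
  -- whose determinant is `-(a c + 4 b) = -2 (6 x + 1)²`, so it is nonincreasing in `s`.
  nlinarith [mul_nonneg (sub_nonneg.mpr hsS) (sq_nonneg (6 * x + 1))]
end

section
/- For every real number t and every shift vector v ∈ {(0,0), (1/3, −2/3), (2/3, −4/3)} ⊆ ℝ², the parallelogram based at the point (t, t/2) and spanned by the vectors (2/3, 2/3) and (2, 1) contains a point of the shifted integer lattice v + ℤ²; that is, there exist integers a, b and real numbers s₁, s₂ ∈ [0,1] such that (a, b) + v = (t, t/2) + s₁·(2/3, 2/3) + s₂·(2, 1). -/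
/-!
A point `(x, y)` has `s₁ = 3 / 2 * (2 * y - x)` and `s₂ = x - y - t / 2`. Each of the three shifts
makes `x - y` range over the integers and `2 * y - x` over a coset of `ℤ` containing `0`, `1 / 3`,
`2 / 3` respectively; these values give `s₁ = 0`, `1 / 2`, `1`, and `x - y = ⌈t / 2⌉` puts `s₂` in
`[0, 1)`.
-/

theorem stmt13 (t : ℝ) (v : ℝ × ℝ)
    (hv : v ∈ ({((0 : ℝ), (0 : ℝ)), (1 / 3, -2 / 3), (2 / 3, -4 / 3)} :
      Set (ℝ × ℝ))) :
    ∃ (a b : ℤ) (s₁ s₂ : ℝ), s₁ ∈ Set.Icc (0 : ℝ) 1 ∧ s₂ ∈ Set.Icc (0 : ℝ) 1 ∧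
      ((a : ℝ) + v.1, (b : ℝ) + v.2) =
        (t + s₁ * (2 / 3) + s₂ * 2, t / 2 + s₁ * (2 / 3) + s₂ * 1) := by
  have h2 : (⌈t / 2⌉ : ℝ) - t / 2 ∈ Set.Icc (0 : ℝ) 1 :=
    ⟨by linarith [Int.le_ceil (t / 2)], by linarith [Int.ceil_lt_add_one (t / 2)]⟩
  simp only [Set.mem_insert_iff, Set.mem_singleton_iff] at hv
  rcases hv with rfl | rfl | rfl
  · refine ⟨2 * ⌈t / 2⌉, ⌈t / 2⌉, 0, ⌈t / 2⌉ - t / 2, by norm_num, h2, Prod.ext ?_ ?_⟩ <;>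
      push_cast <;> ring
  · refine ⟨2 * ⌈t / 2⌉, ⌈t / 2⌉ + 1, 1 / 2, ⌈t / 2⌉ - t / 2, by norm_num, h2, Prod.ext ?_ ?_⟩ <;>
      push_cast <;> ring
  · refine ⟨2 * ⌈t / 2⌉, ⌈t / 2⌉ + 2, 1, ⌈t / 2⌉ - t / 2, by norm_num, h2, Prod.ext ?_ ?_⟩ <;>
      push_cast <;> ring
end
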